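/- Let k ≥ 4 and let (z₁, ..., z_k) be a cyclically oriented k-tuple of points of the unit circle S¹ with cross ratio coordinates λ_j = [z₂:z₃:z₁:z_{j+3}] for j = 1, ..., k−3. Then the cyclically permuted tuple (z_k, z₁, ..., z_{k−1}) is cyclically oriented, and its cross ratio coordinates λ̃_j = [z₁:z₂:z_k:z_{j+2}] satisfy λ̃₁ = 1 − λ_{k−3} and λ̃_j = (1 − λ_{k−3})/(1 − λ_{j−1}) for j = 2, ..., k−3. -/

import Mathlib

open Complex

/-- The cross ratio `[z₁:z₂:z₃:z₄] = (z₁-z₃)(z₂-z₄)/((z₂-z₃)(z₁-z₄))`. -/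
noncomputable def crossRatio (z₁ z₂ z₃ z₄ : ℂ) : ℂ :=
  ((z₁ - z₃) * (z₂ - z₄)) / ((z₂ - z₃) * (z₁ - z₄))

/-- A tuple `(z₁, …, z_k)` of points of `S¹` is *cyclically oriented* if it can be written as
`z_j = e^{iθ_j}` with `θ₁ < θ₂ < ⋯ < θ_k < θ₁ + 2π`. -/
def CyclicallyOriented {k : ℕ} (z : Fin k → ℂ) : Prop :=
  ∃ θ : Fin k → ℝ, StrictMono θ ∧ (∀ i j : Fin k, θ j < θ i + 2 * Real.pi) ∧
    ∀ j, z j = Complex.exp (θ j * Complex.I)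

lemma cyc_inj_aux {k : ℕ} {z : Fin k → ℂ} (h : CyclicallyOriented z) :
    Function.Injective z := by
  obtain ⟨θ, hm, hb, hz⟩ := h
  intro i j hij
  rw [hz, hz, Complex.exp_eq_exp_iff_exists_int] at hij
  obtain ⟨n, hn⟩ := hij
  have h1 : θ i = θ j + n * (2 * Real.pi) := by
    have := congrArg Complex.im hn
    simpa using this
  have h2 := hb i j
  have h3 := hb j i
  have hp := Real.pi_pos
  have h4 : (n : ℝ) < 1 := by nlinarith
  have h5 : (-1 : ℝ) < n := by nlinarith
  have h6 : n < 1 := by exact_mod_cast h4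
  have h7 : -1 < n := by exact_mod_cast h5
  have h8 : n = 0 := by omega
  subst h8
  apply hm.injective
  simpa using h1

lemma one_sub_cross_aux {a b c d : ℂ} (h1 : c ≠ a) (h2 : b ≠ d) :
    1 - crossRatio b c a d = (c - b) * (a - d) / ((c - a) * (b - d)) := by
  have h1 := sub_ne_zero.2 h1
  have h2 := sub_ne_zero.2 h2
  unfold crossRatio
  field_simp
  ring

/-- **Cross ratio coordinates of a cyclic permutation.** If `(z₀, …, z_{k-1})` (0-indexed) is
cyclically oriented with cross ratio coordinates `λ_j = [z₁:z₂:z₀:z_{j+3}]`, then the cyclically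
permuted tuple `w = (z_{k-1}, z₀, …, z_{k-2})` is cyclically oriented and its cross ratio
coordinates `λ̃` satisfy `λ̃₀ = 1 - λ_{k-4}` and `λ̃_j = (1 - λ_{k-4})/(1 - λ_{j-1})` for
`1 ≤ j ≤ k-4` (0-indexed). -/
theorem crossRatio_coords_of_cyclic_shift (k : ℕ) (hk : 4 ≤ k) (z : Fin k → ℂ)
    (hcirc : ∀ j, ‖z j‖ = 1) (hcyc : CyclicallyOriented z)
    (lam : Fin (k - 3) → ℝ)
    (hlam : ∀ j : Fin (k - 3),
      crossRatio (z ⟨1, by omega⟩) (z ⟨2, by omega⟩) (z ⟨0, by omega⟩)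
          (z ⟨(j : ℕ) + 3, by have := j.isLt; omega⟩) = (lam j : ℂ))
    (w : Fin k → ℂ)
    (hw0 : w ⟨0, by omega⟩ = z ⟨k - 1, by omega⟩)
    (hw : ∀ j : Fin k, 1 ≤ (j : ℕ) →
      w j = z ⟨(j : ℕ) - 1, by have := j.isLt; omega⟩) :
    CyclicallyOriented w ∧
    crossRatio (w ⟨1, by omega⟩) (w ⟨2, by omega⟩) (w ⟨0, by omega⟩) (w ⟨3, by omega⟩)
      = ((1 - lam ⟨k - 4, by omega⟩ : ℝ) : ℂ) ∧
    ∀ j : Fin (k - 3), 1 ≤ (j : ℕ) →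
      crossRatio (w ⟨1, by omega⟩) (w ⟨2, by omega⟩) (w ⟨0, by omega⟩)
          (w ⟨(j : ℕ) + 3, by have := j.isLt; omega⟩)
        = (((1 - lam ⟨k - 4, by omega⟩) /
            (1 - lam ⟨(j : ℕ) - 1, by have := j.isLt; omega⟩) : ℝ) : ℂ) := by
  have hinj := cyc_inj_aux hcyc
  have hne : ∀ (a b : ℕ) (ha : a < k) (hb : b < k), a ≠ b → z ⟨a, ha⟩ ≠ z ⟨b, hb⟩ := by
    intro a b ha hb hab h
    exact hab (by simpa using hinj h)
  have hw1 : w ⟨1, by omega⟩ = z ⟨0, by omega⟩ := hw ⟨1, by omega⟩ (by simp)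
  have hw2 : w ⟨2, by omega⟩ = z ⟨1, by omega⟩ := hw ⟨2, by omega⟩ (by simp)
  have hw3 : ∀ (j : ℕ) (hj : j + 3 < k), w ⟨j + 3, hj⟩ = z ⟨j + 2, by omega⟩ :=
    fun j hj => hw ⟨j + 3, hj⟩ (by simp)
  have hl := hlam ⟨k - 4, by omega⟩
  have hlast : (⟨k - 4 + 3, by omega⟩ : Fin k) = ⟨k - 1, by omega⟩ := by
    ext; simp; omega
  simp only [hlast] at hl
  have n20 := hne 2 0 (by omega) (by omega) (by omega)
  have n21 := hne 2 1 (by omega) (by omega) (by omega)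
  have n10 := hne 1 0 (by omega) (by omega) (by omega)
  have n1l := hne 1 (k - 1) (by omega) (by omega) (by omega)
  have n0l := hne 0 (k - 1) (by omega) (by omega) (by omega)
  refine ⟨?_, ?_, ?_⟩
  · obtain ⟨θ, hm, hb, hz⟩ := hcyc
    have hp := Real.pi_pos
    refine ⟨fun j => if (j : ℕ) = 0 then θ ⟨k - 1, by omega⟩ - 2 * Real.pi
      else θ ⟨(j : ℕ) - 1, by have := j.isLt; omega⟩, ?_, ?_, ?_⟩
    · intro i j hij
      have hij' : (i : ℕ) < j := hij
      have hj0 : (j : ℕ) ≠ 0 := by omega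
      by_cases hi : (i : ℕ) = 0
      · simp only [hi, hj0, if_true, if_false]
        have := hb ⟨(j : ℕ) - 1, by have := j.isLt; omega⟩ ⟨k - 1, by omega⟩
        linarith
      · simp only [hi, hj0, if_false]
        apply hm
        rw [Fin.mk_lt_mk]
        omega
    · intro i j
      by_cases hi : (i : ℕ) = 0 <;> by_cases hj : (j : ℕ) = 0
      · simp only [hi, hj, if_true]
        linarith
      · simp only [hi, hj, if_true, if_false]
        have : θ ⟨(j : ℕ) - 1, by have := j.isLt; omega⟩ < θ ⟨k - 1, by omega⟩ := by
          apply hm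
          rw [Fin.mk_lt_mk]
          have := j.isLt
          omega
        linarith
      · simp only [hi, hj, if_true, if_false]
        have := hb ⟨(i : ℕ) - 1, by have := i.isLt; omega⟩ ⟨k - 1, by omega⟩
        linarith
      · simp only [hi, hj, if_false]
        exact hb _ _
    · intro j
      by_cases hj : (j : ℕ) = 0
      · have hj' : j = ⟨0, by omega⟩ := Fin.ext hj
        have hwj : w j = z ⟨k - 1, by omega⟩ := by rw [hj', hw0]
        rw [hwj, hz]
        simp only [hj, if_true]
        rw [Complex.exp_eq_exp_iff_exists_int]
        refine ⟨1, ?_⟩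
        push_cast
        ring
      · rw [hw j (by omega), hz]
        simp only [hj, if_false]
  · rw [hw1, hw2, hw0, hw3 0 (by omega)]
    push_cast
    rw [← hl, one_sub_cross_aux n20 n1l]
    unfold crossRatio
    rw [← neg_sub (z ⟨2, by omega⟩) (z ⟨1, by omega⟩),
      ← neg_sub (z ⟨2, by omega⟩) (z ⟨0, by omega⟩)]
    have := sub_ne_zero.2 n20
    have := sub_ne_zero.2 n1l
    field_simp
  · intro j hj
    have hjk := j.isLt
    have hl2 := hlam ⟨(j : ℕ) - 1, by omega⟩
    have he : (⟨(j : ℕ) - 1 + 3, by omega⟩ : Fin k) = ⟨(j : ℕ) + 2, by omega⟩ := by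
      ext; simp; omega
    simp only [he] at hl2
    have n1e := hne 1 ((j : ℕ) + 2) (by omega) (by omega) (by omega)
    have n0e := hne 0 ((j : ℕ) + 2) (by omega) (by omega) (by omega)
    rw [hw1, hw2, hw0, hw3 j (by omega)]
    push_cast
    rw [← hl, ← hl2, one_sub_cross_aux n20 n1l, one_sub_cross_aux n20 n1e]
    unfold crossRatio
    have := sub_ne_zero.2 n20
    have := sub_ne_zero.2 n21
    have := sub_ne_zero.2 n1l
    have := sub_ne_zero.2 n1e
    have := sub_ne_zero.2 n0e
    field_simp
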